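/- For every δ > 0 and every ε > 0 there exists q₀ such that for every prime power q ≥ q₀ and every real p with 0 < p < 1/q, a p-random subset Q of F² satisfies a(Q) ≤ q^{1/2 + 2δ} with probability at least 1 − ε. -/

import Mathlib

open Finset MeasureTheory
open scoped NNReal ENNReal

/-!
The bound is a union bound over arcs of size `k = ⌊q ^ (1/2 + 2δ)⌋ + 1`: it suffices that the
number of `k`-arcs in `F²`, times `q ^ (-k)`, tends to `0`. For `k` near `√q` a trivial count of
`k`-sets is far too large, so arcs are counted by a two-stage graph-container argument.

Fix `t = ⌈√q⌉` points `T` of an arc. Every line through a point `v ∈ T` contains at most one further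
point of the arc, so the remaining `k - t` points form an independent set in the graph `seenGraph T`
that joins two points lying on a common line through a point of `T`. Cauchy–Schwarz over the `q + 1`
lines through each `v` (`pairs_through_point`), together with the fact that a line meets `T` at most
twice (`card_viewpoints_le_two`), shows that every set `X` of at least `8q` points has a vertex
adjacent to a `t / (16 q)` fraction of `X` (`seenGraph_dense`).

Independent sets in such a graph are counted by the Kleitman–Winston method, in the form of a bound
on the independence polynomial (`indepPoly_le_of_dense`). After `j ≈ 16 √q log q` branchings at most
`8q` candidate points remain, and these contribute only `exp (8e)` at weight `e / q`. Altogether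
(`expected_arcs_le`) the expected number of `k`-arcs is at most `exp (O(√q log² q) - k)`, which
tends to `0`.
-/

/-- A set `P` in the affine plane over `F` is an arc if it contains no three
distinct collinear points. -/
def IsArc (F : Type*) [Field F] (P : Set (F × F)) : Prop :=
  ∀ a ∈ P, ∀ b ∈ P, ∀ c ∈ P,
    a ≠ b → a ≠ c → b ≠ c → ¬ Collinear F ({a, b, c} : Set (F × F))

/-- `numArcs F k` is the number of `k`-element arcs in `F²`. -/
noncomputable def numArcs (F : Type*) [Field F] [Fintype F] (k : ℕ) : ℕ :=
  Nat.card {s : Finset (F × F) // s.card = k ∧ IsArc F ↑s}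

/-- `maxArc F P` is the maximum cardinality of an arc contained in `P`. -/
noncomputable def maxArc (F : Type*) [Field F] (P : Finset (F × F)) : ℕ :=
  sSup {k : ℕ | ∃ s : Finset (F × F), s ⊆ P ∧ s.card = k ∧ IsArc F ↑s}

/-- `numCollinearTriples F P` is the number of 3-element collinear subsets of `P`. -/
noncomputable def numCollinearTriples (F : Type*) [Field F] (P : Finset (F × F)) : ℕ :=
  Nat.card {s : Finset (F × F) // s ⊆ P ∧ s.card = 3 ∧ Collinear F (↑s : Set (F × F))}

/-- `P` contains no `l` distinct collinear points. -/
def NoLCollinear (F : Type*) [Field F] (l : ℕ) (P : Finset (F × F)) : Prop :=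
  ∀ s : Finset (F × F), s ⊆ P → s.card = l → ¬ Collinear F (↑s : Set (F × F))

/-- The product Bernoulli(p) measure on subsets of `F²` (encoded as functions
`F × F → Bool`): each point is included independently with probability `p`. -/
noncomputable def randomMeasure (F : Type*) [Field F] [Fintype F] (p : ℝ≥0) (hp : p ≤ 1) :
    Measure ((F × F) → Bool) :=
  Measure.pi fun _ => (PMF.bernoulli p (by exact_mod_cast hp)).toMeasure

/-- The subset of `F²` corresponding to an indicator function `Q : F × F → Bool`. -/
noncomputable def toSubset {F : Type*} [Field F] [Fintype F] (Q : (F × F) → Bool) :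
    Finset (F × F) := Finset.univ.filter fun x => Q x = true

/-- `L` is an affine line in `F²`, i.e. the affine span of two distinct points. -/
def IsAffineLine (F : Type*) [Field F] (L : Set (F × F)) : Prop :=
  ∃ a b : F × F, a ≠ b ∧ L = (affineSpan F {a, b} : Set (F × F))

/-! ### Independent sets in locally dense graphs -/

open Classical in
/-- The independence polynomial `∑ I, lam ^ |I|` of the subgraph of `G` induced on `X`. -/
noncomputable def indepPoly {V : Type*} (G : SimpleGraph V) (lam : ℝ) (X : Finset V) : ℝ :=
  ∑ I ∈ X.powerset, if G.IsIndepSet (I : Set V) then lam ^ #I else 0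

open Classical in
/-- An independent set either misses `v`, or contains `v` and hence no neighbour of `v`. -/
lemma indepPoly_le_add {V : Type*} (G : SimpleGraph V) {lam : ℝ} (hl : 0 ≤ lam)
    {X : Finset V} {v : V} (hv : v ∈ X) :
    indepPoly G lam X ≤ indepPoly G lam (X.erase v)
      + lam * indepPoly G lam {y ∈ X.erase v | ¬ G.Adj v y} := by
  unfold indepPoly
  conv_lhs => rw [← insert_erase hv]
  rw [sum_powerset_insert (notMem_erase v X)]
  gcongr
  rw [mul_sum, ← sum_subset (powerset_mono.2 (filter_subset (fun y => ¬ G.Adj v y) (X.erase v)))]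
  · refine sum_le_sum fun I hI => ?_
    have hvI : v ∉ I := fun h => by
      have := mem_powerset.1 hI h
      simp at this
    split_ifs with h1 h2 h2
    · rw [card_insert_of_notMem hvI, pow_succ']
    · exact absurd (h1.mono (by simp)) h2
    · positivity
    · simp
  · intro I hI hI'
    rw [if_neg]
    intro h
    apply hI'
    rw [mem_powerset] at hI ⊢
    intro y hy
    refine mem_filter.2 ⟨hI hy, h (by simp) (by simp [hy]) ?_⟩
    exact (ne_of_mem_erase (hI hy)).symm

lemma indepPoly_le_exp {V : Type*} (G : SimpleGraph V) {lam : ℝ} (hl : 0 ≤ lam)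
    (X : Finset V) : indepPoly G lam X ≤ Real.exp (lam * #X) := by
  classical
  calc indepPoly G lam X ≤ ∑ I ∈ X.powerset, lam ^ #I := by
        refine sum_le_sum fun I _ => ?_
        split_ifs
        · exact le_rfl
        · positivity
    _ = (lam + 1) ^ #X := by
        simpa using sum_pow_mul_eq_add_pow lam 1 X
    _ ≤ (Real.exp lam) ^ #X := by
        gcongr
        exact Real.add_one_le_exp lam
    _ = Real.exp (lam * #X) := by rw [← Real.exp_nat_mul, mul_comm]

open Classical in
/-- The Kleitman–Winston bound in generating-function form. As long as a set has at least `R`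
vertices, some vertex has a `β`-fraction of the set as neighbours; branching on that vertex either
discards it or shrinks the set by a factor `1 - β`, and the latter happens at most `j` times before
the size drops to `R`. -/
lemma indepPoly_le_of_dense {V : Type*} [Fintype V] (G : SimpleGraph V) {lam β R : ℝ}
    (hl : 0 ≤ lam) (hβ : β ≤ 1)
    (hdeg : ∀ X : Finset V, R ≤ #X → ∃ v ∈ X, β * #X ≤ #{y ∈ X | G.Adj v y})
    (j : ℕ) : ∀ X : Finset V, (1 - β) ^ j * #X ≤ R →
      indepPoly G lam X ≤ Real.exp (lam * R) * (1 + lam * Fintype.card V) ^ j := by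
  induction j with
  | zero =>
    intro X hX
    simp only [pow_zero, one_mul, mul_one] at hX ⊢
    exact (indepPoly_le_exp G hl X).trans (by gcongr)
  | succ j ih =>
    set A : ℝ := Real.exp (lam * R) * (1 + lam * Fintype.card V) ^ j with hA
    have hA0 : 0 ≤ A := by positivity
    -- Deleting vertices one at a time costs one term `lam * A` each.
    have key : ∀ n : ℕ, ∀ X : Finset V, #X = n → (1 - β) ^ (j + 1) * #X ≤ R →
        indepPoly G lam X ≤ A * (1 + lam * n) := by
      intro n
      induction n with
      | zero =>
        intro X hX hXR
        simp only [Nat.cast_zero, mul_zero, add_zero, mul_one]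
        apply ih
        simpa [hX] using hXR
      | succ n ihn =>
        intro X hX hXR
        by_cases hR : R ≤ #X
        · obtain ⟨v, hv, hvd⟩ := hdeg X hR
          have hc : #(X.erase v) = n := by rw [card_erase_of_mem hv, hX]; simp
          have h1 : indepPoly G lam (X.erase v) ≤ A * (1 + lam * n) := by
            refine ihn _ hc (le_trans ?_ hXR)
            have : 0 ≤ 1 - β := by linarith
            gcongr
            exact erase_subset v X
          have h2 : indepPoly G lam {y ∈ X.erase v | ¬ G.Adj v y} ≤ A := by
            apply ih
            have hle : (#{y ∈ X.erase v | ¬ G.Adj v y} : ℝ) ≤ (1 - β) * #X := by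
              have h3 : #{y ∈ X.erase v | ¬ G.Adj v y} ≤ #{y ∈ X | ¬ G.Adj v y} :=
                card_le_card (filter_subset_filter _ (erase_subset v X))
              have h4 := card_filter_add_card_filter_not (s := X) (fun y => G.Adj v y)
              have h3' : (#{y ∈ X.erase v | ¬ G.Adj v y} : ℝ) ≤ #{y ∈ X | ¬ G.Adj v y} := by
                exact_mod_cast h3
              have h4' : (#{y ∈ X | G.Adj v y} : ℝ) + #{y ∈ X | ¬ G.Adj v y} = #X := by
                exact_mod_cast h4
              linarith
            have h0 : 0 ≤ 1 - β := by linarith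
            calc (1 - β) ^ j * (#{y ∈ X.erase v | ¬ G.Adj v y} : ℝ)
                ≤ (1 - β) ^ j * ((1 - β) * #X) := by gcongr
              _ = (1 - β) ^ (j + 1) * #X := by ring
              _ ≤ R := hXR
          calc indepPoly G lam X ≤ _ := indepPoly_le_add G hl hv
            _ ≤ A * (1 + lam * n) + lam * A := by gcongr
            _ = A * (1 + lam * (n + 1 : ℕ)) := by push_cast; ring
        · push Not at hR
          have h5 : indepPoly G lam X ≤ Real.exp (lam * R) :=
            (indepPoly_le_exp G hl X).trans (by gcongr)
          refine h5.trans ?_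
          rw [hA, mul_assoc]
          refine le_mul_of_one_le_right (Real.exp_pos _).le ?_
          exact one_le_mul_of_one_le_of_one_le
            (one_le_pow₀ (le_add_of_nonneg_right (by positivity)))
            (le_add_of_nonneg_right (by positivity))
    intro X hX
    refine (key _ X rfl hX).trans ?_
    rw [pow_succ, ← mul_assoc, ← hA]
    gcongr
    exact card_le_univ X

lemma card_indep_mul_le {V : Type*} [Fintype V] (G : SimpleGraph V) {lam : ℝ} (hl : 0 ≤ lam)
    (m : ℕ) (A : Finset (Finset V)) (hA : ∀ I ∈ A, #I = m ∧ G.IsIndepSet (I : Set V)) :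
    (#A : ℝ) * lam ^ m ≤ indepPoly G lam univ := by
  unfold indepPoly
  rw [← nsmul_eq_mul, ← sum_const]
  refine le_trans (sum_le_sum fun I hI => ?_) (sum_le_sum_of_subset_of_nonneg (s := A) ?_ ?_)
  · rw [if_pos (hA I hI).2, (hA I hI).1]
  · intro I _
    simp
  · intro I _ _
    split_ifs <;> positivity

/-! ### The graph of pairs seen from a point of an arc -/

/-- The slope of a vector of the plane, with `none` for vertical vectors. It takes `q + 1` values,
and nonzero vectors of equal slope are proportional. -/
noncomputable def slopeOf {F : Type*} [Field F] (u : F × F) : Option F :=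
  open Classical in if u.1 = 0 then none else some (u.2 / u.1)

lemma exists_smul_of_slopeOf_eq {F : Type*} [Field F] {u w : F × F} (hu : u ≠ 0)
    (h : slopeOf u = slopeOf w) : ∃ r : F, w = r • u := by
  unfold slopeOf at h
  split_ifs at h with h1 h2
  · have hu2 : u.2 ≠ 0 := fun h2 => hu (Prod.ext h1 h2)
    refine ⟨w.2 / u.2, Prod.ext ?_ ?_⟩
    · simp [h1, h2]
    · simp [hu2]
  · rename_i h3
    simp only [Option.some.injEq] at h
    refine ⟨w.1 / u.1, Prod.ext ?_ ?_⟩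
    · simp [h1]
    · simp only [Prod.smul_snd, smul_eq_mul]
      field_simp at h ⊢
      linear_combination -h

/-- Two distinct points `x`, `y` are joined when some `v ∈ T` sees them, both different from `v`,
in the same direction. If `S ⊇ T` is an arc, then `S \ T` is independent in this graph. -/
def seenGraph {F : Type*} [Field F] (T : Finset (F × F)) : SimpleGraph (F × F) where
  Adj x y := x ≠ y ∧ ∃ v ∈ T, x ≠ v ∧ y ≠ v ∧ slopeOf (x - v) = slopeOf (y - v)
  symm := ⟨fun _ _ h => ⟨h.1.symm, h.2.imp fun _ hv => ⟨hv.1, hv.2.2.1, hv.2.1, hv.2.2.2.symm⟩⟩⟩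
  loopless := ⟨fun _ h => h.1 rfl⟩

lemma mem_line_of_slopeOf_eq {F : Type*} [Field F] {v x y : F × F} (hxy : x ≠ y) (hx : x ≠ v)
    (h : slopeOf (x - v) = slopeOf (y - v)) : v ∈ line[F, x, y] := by
  obtain ⟨r, hr⟩ := exists_smul_of_slopeOf_eq (sub_ne_zero.2 hx) h
  have hr1 : r - 1 ≠ 0 := by
    intro h1
    rw [sub_eq_zero.1 h1, one_smul] at hr
    exact hxy (sub_left_injective hr).symm
  -- `y - x = (r - 1) • (x - v)`, so `v = x - (r - 1)⁻¹ • (y - x)`.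
  have : v = AffineMap.lineMap x y (-(r - 1)⁻¹) := by
    have e : y - x = (r - 1) • (x - v) := by
      rw [sub_smul, one_smul, ← hr]; abel
    rw [AffineMap.lineMap_apply, vsub_eq_sub, vadd_eq_add, e, smul_smul, neg_mul,
      inv_mul_cancel₀ hr1, neg_smul, one_smul]
    abel
  rw [this]
  exact AffineMap.lineMap_mem_affineSpan_pair _ _ _

open Classical in
/-- The line `xy` meets an arc in at most two points, so at most two points of `T` see `x` and `y`
in the same direction. -/
lemma card_viewpoints_le_two {F : Type*} [Field F] {T : Finset (F × F)}
    (hT : IsArc F (T : Set (F × F))) {x y : F × F} (hxy : x ≠ y) :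
    #{v ∈ T | x ≠ v ∧ y ≠ v ∧ slopeOf (x - v) = slopeOf (y - v)} ≤ 2 := by
  by_contra! h
  obtain ⟨a, b, c, ha, hb, hc, hab, hac, hbc⟩ := two_lt_card_iff.1 h
  rw [mem_filter] at ha hb hc
  refine hT a ha.1 b hb.1 c hc.1 hab hac hbc ?_
  exact collinear_triple_of_mem_affineSpan_pair
    (mem_line_of_slopeOf_eq hxy ha.2.1 ha.2.2.2)
    (mem_line_of_slopeOf_eq hxy hb.2.1 hb.2.2.2)
    (mem_line_of_slopeOf_eq hxy hc.2.1 hc.2.2.2)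

open Classical in
lemma isIndepSet_seenGraph {F : Type*} [Field F] {T I : Finset (F × F)}
    (h : IsArc F ((T ∪ I : Finset (F × F)) : Set (F × F))) :
    (seenGraph T).IsIndepSet (I : Set (F × F)) := by
  rintro x hx y hy hxy ⟨-, v, hv, hxv, hyv, hs⟩
  refine h v (by simp [hv]) x (by simp [mem_coe.1 hx]) y (by simp [mem_coe.1 hy])
    hxv.symm hyv.symm hxy ?_
  have := mem_line_of_slopeOf_eq hxy hxv hs
  exact collinear_insert_of_mem_affineSpan_pair this

open Classical in
/-- The lines through `v` split `X \ {v}` into `q + 1` classes; Cauchy–Schwarz bounds below the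
number of ordered pairs of distinct points in a common class. -/
lemma pairs_through_point {F : Type*} [Field F] [Fintype F] (v : F × F) (X : Finset (F × F))
    (hX : 8 * (Fintype.card F : ℝ) ≤ #X) :
    (#X : ℝ) ^ 2 / (8 * Fintype.card F) ≤
      #{z ∈ X ×ˢ X | z.1 ≠ z.2 ∧ z.1 ≠ v ∧ z.2 ≠ v ∧ slopeOf (z.1 - v) = slopeOf (z.2 - v)} := by
  set q : ℝ := (Fintype.card F : ℝ) with hq
  have hq2 : 2 ≤ q := by
    have : 1 < Fintype.card F := Fintype.one_lt_card
    rw [hq]; exact_mod_cast this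
  set Y := X.erase v with hY
  set D := {z ∈ X ×ˢ X | z.1 ≠ z.2 ∧ z.1 ≠ v ∧ z.2 ≠ v ∧ slopeOf (z.1 - v) = slopeOf (z.2 - v)}
    with hD
  set fib : Option F → Finset (F × F) := fun d => {x ∈ Y | slopeOf (x - v) = d} with hfib
  have hsum : #Y = ∑ d : Option F, #(fib d) :=
    card_eq_sum_card_fiberwise (fun _ _ => mem_coe.2 (mem_univ _))
  have hcs : (#Y : ℝ) ^ 2 ≤ (q + 1) * ∑ d : Option F, (#(fib d) : ℝ) ^ 2 := by
    have := sq_sum_le_card_mul_sum_sq (s := (univ : Finset (Option F)))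
      (f := fun d => (#(fib d) : ℝ))
    rw [hsum]
    push_cast
    simpa [hq] using this
  have hsq : ∑ d : Option F, #(fib d) ^ 2 ≤ #D + #Y := by
    have h1 : ∑ d : Option F, #(fib d) ^ 2
        = #{z ∈ Y ×ˢ Y | slopeOf (z.1 - v) = slopeOf (z.2 - v)} := by
      rw [card_eq_sum_card_fiberwise (f := fun z : (F × F) × (F × F) => slopeOf (z.1 - v))
        (t := univ) (fun _ _ => mem_coe.2 (mem_univ _))]
      refine sum_congr rfl fun d _ => ?_
      rw [sq, ← card_product]
      congr 1
      ext z
      simp only [hfib, mem_product, mem_filter]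
      constructor
      · rintro ⟨⟨h1, h2⟩, h3, h4⟩
        exact ⟨⟨⟨h1, h3⟩, h2.trans h4.symm⟩, h2⟩
      · rintro ⟨⟨⟨h1, h3⟩, h4⟩, h2⟩
        exact ⟨⟨h1, h2⟩, h3, h4.symm.trans h2⟩
    rw [h1, ← diag_card Y]
    refine (card_le_card ?_).trans (card_union_le _ _)
    intro z hz
    simp only [hD, hY, mem_filter, mem_product, mem_erase, mem_union, mem_diag] at hz ⊢
    by_cases hzz : z.1 = z.2
    · exact Or.inr ⟨hz.1.1, hzz⟩
    · exact Or.inl ⟨⟨hz.1.1.2, hz.1.2.2⟩, hzz, hz.1.1.1, hz.1.2.1, hz.2⟩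
  have hsq' : ∑ d : Option F, (#(fib d) : ℝ) ^ 2 ≤ #D + #Y := by exact_mod_cast hsq
  have hYX : (#X : ℝ) - 1 ≤ #Y := by
    have h1 : #X - 1 ≤ #Y := pred_card_le_card_erase
    have h2 : #X ≤ #Y + 1 := by omega
    have : (#X : ℝ) ≤ #Y + 1 := by exact_mod_cast h2
    linarith
  have hDr : (0 : ℝ) ≤ #D := by positivity
  generalize (#D : ℝ) = d at *
  generalize (#Y : ℝ) = n at *
  generalize (#X : ℝ) = M at *
  have h1 : n ^ 2 ≤ (q + 1) * (d + n) := hcs.trans (by gcongr)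
  have h2 : M / 2 * (M / 2) ≤ n * (n - (q + 1)) := by
    apply mul_le_mul <;> linarith
  have h3 : n * (n - (q + 1)) ≤ (q + 1) * d := by linarith
  have h4 : (q + 1) * d ≤ 2 * q * d := by gcongr; linarith
  rw [div_le_iff₀ (by positivity)]
  nlinarith

open Classical in
lemma seenGraph_dense {F : Type*} [Field F] [Fintype F] {T : Finset (F × F)}
    (hT : IsArc F (T : Set (F × F))) (X : Finset (F × F))
    (hX : 8 * (Fintype.card F : ℝ) ≤ #X) :
    ∃ x ∈ X, (#T : ℝ) / (16 * Fintype.card F) * #X ≤ #{y ∈ X | (seenGraph T).Adj x y} := by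
  set q : ℝ := (Fintype.card F : ℝ) with hq
  have hq0 : 0 < q := by rw [hq]; exact_mod_cast Fintype.card_pos
  have hXne : X.Nonempty := by
    rw [← card_pos]
    have : (0 : ℝ) < #X := by linarith
    exact_mod_cast this
  set P : (F × F) → (F × F) × (F × F) → Prop := fun v z =>
    z.1 ≠ z.2 ∧ z.1 ≠ v ∧ z.2 ≠ v ∧ slopeOf (z.1 - v) = slopeOf (z.2 - v) with hP
  set E := {z ∈ X ×ˢ X | (seenGraph T).Adj z.1 z.2} with hE
  have hcount : ∑ v ∈ T, #{z ∈ X ×ˢ X | P v z} ≤ #E * 2 := by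
    have h1 : ∑ v ∈ T, #{z ∈ X ×ˢ X | P v z} = ∑ v ∈ T, #{z ∈ E | P v z} := by
      refine sum_congr rfl fun v hv => ?_
      congr 1
      ext z
      simp only [hE, mem_filter]
      constructor
      · rintro ⟨h1, h2⟩
        exact ⟨⟨h1, h2.1, v, hv, h2.2⟩, h2⟩
      · rintro ⟨⟨h1, -⟩, h2⟩
        exact ⟨h1, h2⟩
    rw [h1]
    have h2 := sum_card_bipartiteAbove_eq_sum_card_bipartiteBelow (s := T) (t := E) P
    unfold bipartiteAbove bipartiteBelow at h2
    rw [h2, ← smul_eq_mul]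
    refine sum_le_card_nsmul _ _ _ fun z hz => ?_
    have hne : z.1 ≠ z.2 := (mem_filter.1 hz).2.1
    refine le_trans (card_le_card ?_) (card_viewpoints_le_two hT hne)
    intro v hv
    rw [mem_filter] at hv ⊢
    exact ⟨hv.1, hv.2.2⟩
  have hlow : (#T : ℝ) * ((#X : ℝ) ^ 2 / (8 * q)) ≤ #E * 2 := by
    calc (#T : ℝ) * ((#X : ℝ) ^ 2 / (8 * q)) = ∑ v ∈ T, (#X : ℝ) ^ 2 / (8 * q) := by
          rw [sum_const, nsmul_eq_mul]
      _ ≤ ∑ v ∈ T, (#{z ∈ X ×ˢ X | P v z} : ℝ) :=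
          sum_le_sum fun v _ => pairs_through_point v X hX
      _ ≤ #E * 2 := by exact_mod_cast hcount
  have hEsum : #E = ∑ x ∈ X, #{y ∈ X | (seenGraph T).Adj x y} := by
    simp only [hE, card_filter, sum_product]
  by_contra! hcon
  have hlt : (#E : ℝ) < ∑ x ∈ X, (#T : ℝ) / (16 * q) * #X := by
    rw [hEsum]
    push_cast
    exact sum_lt_sum_of_nonempty hXne hcon
  rw [sum_const, nsmul_eq_mul] at hlt
  have : (#T : ℝ) * ((#X : ℝ) ^ 2 / (8 * q)) = 2 * (#X * ((#T : ℝ) / (16 * q) * #X)) := by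
    field_simp
    ring
  linarith

/-! ### Counting arcs -/

open Classical in
/-- Removing any `t` of its points from a `k`-arc leaves an independent set of size `k - t` in the
graph of those `t` points. -/
lemma card_arcs_le_sum {F : Type*} [Field F] [Fintype F] {k t : ℕ} (htk : t ≤ k) :
    #{S : Finset (F × F) | #S = k ∧ IsArc F (S : Set (F × F))} ≤
      ∑ T : Finset (F × F) with #T = t ∧ IsArc F (T : Set (F × F)),
        #{I : Finset (F × F) | #I = k - t ∧ (seenGraph T).IsIndepSet (I : Set (F × F))} := by
  refine le_trans (card_le_card ?_) (card_biUnion_le.trans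
    (sum_le_sum fun T _ => card_image_le (f := fun I => T ∪ I)))
  intro S hS
  simp only [mem_filter, mem_univ, true_and] at hS
  obtain ⟨hSk, hSarc⟩ := hS
  obtain ⟨T, hTS, hTt⟩ := exists_subset_card_eq (htk.trans hSk.ge)
  simp only [mem_biUnion, mem_image, mem_filter, mem_univ, true_and]
  refine ⟨T, ⟨hTt, fun a ha b hb c hc => hSarc a (hTS ha) b (hTS hb) c (hTS hc)⟩, S \ T,
    ⟨?_, ?_⟩, union_sdiff_of_subset hTS⟩
  · rw [card_sdiff_of_subset hTS, hSk, hTt]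
  · apply isIndepSet_seenGraph
    rwa [union_sdiff_of_subset hTS]

open Classical in
/-- The expected number of `k`-arcs in a `1/q`-random set, bounded by using the Kleitman–Winston
lemma with weight `e / q`; the factor `e` is what produces the decay `exp (-(k - t))`. -/
lemma expected_arcs_le {F : Type*} [Field F] [Fintype F] {k t j : ℕ} (htk : t ≤ k)
    (ht : t ≤ 16 * Fintype.card F)
    (hj : (1 - (t : ℝ) / (16 * Fintype.card F)) ^ j * (Fintype.card F : ℝ) ^ 2
      ≤ 8 * Fintype.card F) :
    (#{S : Finset (F × F) | #S = k ∧ IsArc F (S : Set (F × F))} : ℝ)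
        * (1 / (Fintype.card F : ℝ)) ^ k ≤
      (Fintype.card F : ℝ) ^ t * (Real.exp (8 * Real.exp 1)
        * (1 + Real.exp 1 * Fintype.card F) ^ j) * Real.exp (-((k : ℝ) - t)) := by
  have hq0 : (0 : ℝ) < Fintype.card F := by exact_mod_cast Fintype.card_pos
  have hcardV : (Fintype.card (F × F) : ℝ) = (Fintype.card F : ℝ) ^ 2 := by
    rw [Fintype.card_prod]; push_cast; ring
  have hcardV' : Fintype.card (F × F) = (Fintype.card F) ^ 2 := by
    rw [Fintype.card_prod, sq]
  have htq : (t : ℝ) ≤ 16 * Fintype.card F := by exact_mod_cast ht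
  set q : ℝ := (Fintype.card F : ℝ) with hq
  set lam : ℝ := Real.exp 1 / q with hlam
  have hl : 0 ≤ lam := by positivity
  set B : ℝ := Real.exp (8 * Real.exp 1) * (1 + Real.exp 1 * q) ^ j with hB
  have hB0 : 0 ≤ B := by positivity
  set Ts : Finset (Finset (F × F)) := {T | #T = t ∧ IsArc F (T : Set (F × F))} with hTs
  have hT : ∀ T ∈ Ts,
      (#{I : Finset (F × F) | #I = k - t ∧ (seenGraph T).IsIndepSet (I : Set (F × F))} : ℝ)
        * lam ^ (k - t) ≤ B := by
    intro T hT
    simp only [hTs, mem_filter, mem_univ, true_and] at hT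
    refine (card_indep_mul_le (seenGraph T) hl (k - t) _
      fun I hI => (mem_filter.1 hI).2).trans ?_
    have h := indepPoly_le_of_dense (seenGraph T) (β := (t : ℝ) / (16 * q)) (R := 8 * q) hl
      ((div_le_one (by positivity)).2 htq)
      (fun X hX => by
        have := seenGraph_dense hT.2 X hX
        rwa [hT.1] at this) j univ
      (by rw [card_univ, hcardV]; exact hj)
    refine h.trans_eq ?_
    have e1 : lam * (8 * q) = 8 * Real.exp 1 := by rw [hlam]; field_simp
    have e2 : lam * q ^ 2 = Real.exp 1 * q := by rw [hlam]; field_simp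
    rw [hB, hcardV, e1, e2]
  have hTcard : (#Ts : ℝ) ≤ (q ^ 2) ^ t := by
    have h1 : Ts ⊆ powersetCard t univ := fun T hT => by
      simp only [hTs, mem_filter, mem_univ, true_and] at hT
      simp [hT.1]
    have h2 : #Ts ≤ (Fintype.card F ^ 2) ^ t := by
      refine (card_le_card h1).trans ?_
      rw [card_powersetCard, card_univ, hcardV']
      exact Nat.choose_le_pow _ _
    rw [hq]; exact_mod_cast h2
  have hN : (#{S : Finset (F × F) | #S = k ∧ IsArc F (S : Set (F × F))} : ℝ) * lam ^ (k - t)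
      ≤ (q ^ 2) ^ t * B := by
    calc _ ≤ (∑ T ∈ Ts,
        (#{I : Finset (F × F) | #I = k - t ∧ (seenGraph T).IsIndepSet (I : Set (F × F))} : ℝ))
          * lam ^ (k - t) := by
          gcongr
          exact_mod_cast card_arcs_le_sum (F := F) htk
      _ ≤ ∑ T ∈ Ts, B := by
          rw [sum_mul]; exact sum_le_sum hT
      _ = #Ts * B := by rw [sum_const, nsmul_eq_mul]
      _ ≤ _ := by gcongr
  have hsplit : (1 / q) ^ k = lam ^ (k - t) * ((1 / q) ^ t * Real.exp (-((k : ℝ) - t))) := by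
    obtain ⟨m, rfl⟩ := Nat.exists_eq_add_of_le htk
    have he : Real.exp (-(((t + m : ℕ) : ℝ) - t)) = (Real.exp 1 ^ m)⁻¹ := by
      rw [← Real.exp_nat_mul, ← Real.exp_neg]
      congr 1; push_cast; ring
    rw [he, hlam, Nat.add_sub_cancel_left, pow_add, div_pow]
    field_simp
    rw [← mul_pow, one_div_mul_eq_div]
  rw [hsplit, ← mul_assoc]
  calc _ ≤ (q ^ 2) ^ t * B * ((1 / q) ^ t * Real.exp (-((k : ℝ) - t))) := by gcongr
    _ = q ^ t * B * Real.exp (-((k : ℝ) - t)) := by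
      have : (q ^ 2) ^ t * (1 / q) ^ t = q ^ t := by
        rw [← mul_pow]; congr 1; field_simp
      rw [← this]; ring

/-! ### The random set -/

lemma randomMeasure_superset {F : Type*} [Field F] [Fintype F] (p : ℝ≥0) (hp : p ≤ 1)
    (S : Finset (F × F)) :
    randomMeasure F p hp {Q | S ⊆ toSubset Q} = (p : ℝ≥0∞) ^ #S := by
  classical
  have h : {Q : (F × F) → Bool | S ⊆ toSubset Q}
      = Set.pi Set.univ (fun x => if x ∈ S then ({true} : Set Bool) else Set.univ) := by
    ext Q
    simp only [toSubset, Finset.subset_iff, mem_filter, mem_univ, true_and, Set.mem_ofPred_eq,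
      Set.mem_pi, Set.mem_univ, forall_const]
    refine forall_congr' fun x => ?_
    by_cases hx : x ∈ S <;> simp [hx]
  rw [h, randomMeasure, Measure.pi_pi]
  have h2 : ∀ x : F × F, (PMF.bernoulli p hp).toMeasure
      (if x ∈ S then ({true} : Set Bool) else Set.univ) = if x ∈ S then (p : ℝ≥0∞) else 1 := by
    intro x
    split_ifs
    · rw [PMF.toMeasure_apply_singleton _ _ (measurableSet_singleton _)]
      simp [PMF.bernoulli_apply]
    · exact measure_univ
  simp only [h2]
  rw [prod_ite_mem, univ_inter, prod_const]

instance {F : Type*} [Field F] [Fintype F] (p : ℝ≥0) (hp : p ≤ 1) :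
    IsProbabilityMeasure (randomMeasure F p hp) := by
  unfold randomMeasure
  infer_instance

lemma exists_arc_of_le_maxArc {F : Type*} [Field F] {P : Finset (F × F)} {k : ℕ}
    (h : k ≤ maxArc F P) : ∃ S ⊆ P, #S = k ∧ IsArc F (S : Set (F × F)) := by
  have hmem : maxArc F P ∈ {k : ℕ | ∃ s : Finset (F × F), s ⊆ P ∧ s.card = k ∧ IsArc F ↑s} := by
    refine Nat.sSup_mem ⟨0, ∅, by simp, by simp, by simp [IsArc]⟩ ⟨#P, ?_⟩
    rintro _ ⟨s, hs, rfl, -⟩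
    exact card_le_card hs
  obtain ⟨s, hs, hc, harc⟩ := hmem
  obtain ⟨S, hSs, hS⟩ := exists_subset_card_eq (h.trans hc.ge)
  exact ⟨S, hSs.trans hs, hS, fun a ha b hb c hc => harc a (hSs ha) b (hSs hb) c (hSs hc)⟩

open Classical in
/-- The union bound over all `k`-arcs. -/
lemma one_sub_le_randomMeasure {F : Type*} [Field F] [Fintype F] (p : ℝ≥0) (hp : p ≤ 1)
    (hpq : (p : ℝ) ≤ 1 / (Fintype.card F : ℝ)) (x ε : ℝ) (hx : 0 ≤ x)
    (hε : (#{S : Finset (F × F) | #S = ⌊x⌋₊ + 1 ∧ IsArc F (S : Set (F × F))} : ℝ)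
        * (1 / (Fintype.card F : ℝ)) ^ (⌊x⌋₊ + 1) ≤ ε) :
    1 - ENNReal.ofReal ε ≤ randomMeasure F p hp {Q | (maxArc F (toSubset Q) : ℝ) ≤ x} := by
  set A : Finset (Finset (F × F)) := {S | #S = ⌊x⌋₊ + 1 ∧ IsArc F (S : Set (F × F))} with hA
  set good : Set ((F × F) → Bool) := {Q | (maxArc F (toSubset Q) : ℝ) ≤ x} with hgood
  have hbad : randomMeasure F p hp goodᶜ ≤ ENNReal.ofReal ε := by
    calc randomMeasure F p hp goodᶜ
        ≤ randomMeasure F p hp (⋃ S ∈ A, {Q | S ⊆ toSubset Q}) := by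
          refine measure_mono fun Q hQ => ?_
          simp only [hgood, Set.mem_compl_iff, Set.mem_ofPred_eq, not_le] at hQ
          obtain ⟨S, hS, hk, harc⟩ := exists_arc_of_le_maxArc
            (Nat.succ_le_of_lt ((Nat.floor_lt hx).2 hQ))
          simp only [Set.mem_iUnion, Set.mem_ofPred_eq]
          exact ⟨S, by simp [hA, harc, hk], hS⟩
      _ ≤ ∑ S ∈ A, randomMeasure F p hp {Q | S ⊆ toSubset Q} := measure_biUnion_finset_le _ _
      _ = ∑ S ∈ A, (p : ℝ≥0∞) ^ (⌊x⌋₊ + 1) := by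
          refine sum_congr rfl fun S hS => ?_
          simp only [hA, mem_filter, mem_univ, true_and] at hS
          rw [randomMeasure_superset, hS.1]
      _ = ENNReal.ofReal (#A * (p : ℝ) ^ (⌊x⌋₊ + 1)) := by
          rw [sum_const, nsmul_eq_mul, ENNReal.ofReal_mul (by positivity),
            ENNReal.ofReal_pow (by positivity), ENNReal.ofReal_natCast,
            ENNReal.ofReal_coe_nnreal]
      _ ≤ ENNReal.ofReal ε := by
          refine ENNReal.ofReal_le_ofReal (le_trans ?_ hε)
          gcongr
  have hmeas : MeasurableSet good := (Set.toFinite good).measurableSet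
  have := prob_compl_eq_one_sub (μ := randomMeasure F p hp) hmeas.compl
  rw [compl_compl] at this
  rw [this]
  gcongr

/-! ### Asymptotics and conclusion -/

/-- With `t = ⌈√q⌉` and `j = ⌈16 √q log q⌉`, every term of the exponent is `O(√q log² q)`, which
loses against `k ≥ √q · q ^ (2 δ)`. -/
lemma numeric_bound {δ C q : ℝ} {k t j : ℕ} (hC : 0 ≤ C) (hq : 8 ≤ q)
    (hbig : 64 * Real.log q ^ (2 : ℕ) + C ≤ q ^ (2 * δ))
    (hk : q ^ ((1 : ℝ) / 2 + 2 * δ) ≤ k) (ht : (t : ℝ) ≤ √q + 1)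
    (hj : (j : ℝ) ≤ 16 * √q * Real.log q + 1) :
    q ^ t * (Real.exp (8 * Real.exp 1) * (1 + Real.exp 1 * q) ^ j)
      * Real.exp (-((k : ℝ) - t)) ≤ Real.exp (-C) := by
  have hq0 : 0 < q := by linarith
  set L := Real.log q with hL
  set s := √q with hs
  have he : Real.exp 1 < 3 := Real.exp_one_lt_three
  have hL1 : 1 ≤ L := by
    rw [hL, Real.le_log_iff_exp_le hq0]; linarith
  have hs1 : 1 ≤ s := by
    rw [hs]; exact Real.one_le_sqrt.2 (by linarith)
  have hqt : q ^ t = Real.exp (t * L) := by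
    rw [Real.exp_nat_mul, hL, Real.exp_log hq0]
  have hqj : (1 + Real.exp 1 * q) ^ j ≤ Real.exp (j * (2 * L)) := by
    rw [Real.exp_nat_mul]
    gcongr
    have : Real.exp (2 * L) = q ^ 2 := by
      rw [show (2 : ℝ) * L = ((2 : ℕ) : ℝ) * L by norm_num, Real.exp_nat_mul, hL, Real.exp_log hq0]
    rw [this]
    nlinarith
  have hk' : s * (64 * L ^ 2 + C) ≤ k := by
    refine le_trans ?_ hk
    rw [Real.rpow_add hq0, ← Real.sqrt_eq_rpow]
    gcongr
  calc q ^ t * (Real.exp (8 * Real.exp 1) * (1 + Real.exp 1 * q) ^ j)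
      * Real.exp (-((k : ℝ) - t))
      ≤ Real.exp (t * L) * (Real.exp (8 * 3) * Real.exp (j * (2 * L)))
        * Real.exp (-((k : ℝ) - t)) := by
        rw [hqt]
        gcongr
    _ = Real.exp (t * L + (8 * 3 + j * (2 * L)) + -((k : ℝ) - t)) := by
        rw [Real.exp_add, Real.exp_add, Real.exp_add]
    _ ≤ Real.exp (-C) := by
        apply Real.exp_le_exp.2
        have hLL : L ≤ L ^ 2 := by nlinarith
        have h1 : (t : ℝ) * L ≤ (s + 1) * L := by gcongr
        have h2 : (j : ℝ) * (2 * L) ≤ (16 * s * L + 1) * (2 * L) := by gcongr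
        have h3 : s * L ≤ s * L ^ 2 := by gcongr
        have h4 : L ^ 2 ≤ s * L ^ 2 := le_mul_of_one_le_left (by positivity) hs1
        have h5 : s ≤ s * L := le_mul_of_one_le_right (by linarith) hL1
        have h6 : C ≤ s * C := le_mul_of_one_le_left hC hs1
        have h7 : 1 ≤ s * L ^ 2 := by nlinarith
        nlinarith

lemma exists_threshold (δ C : ℝ) (hδ : 0 < δ) : ∃ q₀ : ℕ, ∀ n : ℕ, q₀ ≤ n →
    64 * Real.log n ^ (2 : ℕ) + C ≤ (n : ℝ) ^ (2 * δ) := by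
  have h1 := (isLittleO_log_rpow_rpow_atTop (s := 2 * δ) 2 (by linarith)).bound
    (show (0 : ℝ) < 1 / 128 by norm_num)
  have h2 := (tendsto_rpow_atTop (y := 2 * δ) (by linarith)).eventually_ge_atTop (2 * C)
  have h3 := tendsto_natCast_atTop_atTop (R := ℝ) |>.eventually (h1.and h2)
  obtain ⟨q₀, hq₀⟩ := Filter.eventually_atTop.1 h3
  refine ⟨q₀, fun n hn => ?_⟩
  obtain ⟨h4, h5⟩ := hq₀ n hn
  rw [Real.rpow_two, Real.norm_of_nonneg (by positivity), Real.norm_of_nonneg (by positivity)] at h4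
  linarith

theorem random_arc_upper_small_p :
    ∀ δ ε : ℝ, 0 < δ → 0 < ε → ∃ q₀ : ℕ,
      ∀ (F : Type) [Field F] [Fintype F], q₀ ≤ Fintype.card F →
      ∀ (p : ℝ≥0) (hp : p ≤ 1), 0 < p → (p : ℝ) < 1 / (Fintype.card F : ℝ) →
      1 - ENNReal.ofReal ε ≤
        randomMeasure F p hp
          {Q | (maxArc F (toSubset Q) : ℝ) ≤
            (Fintype.card F : ℝ) ^ ((1 : ℝ) / 2 + 2 * δ)} := by
  intro δ ε hδ hε
  set C : ℝ := max 0 (-Real.log ε) with hC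
  have hC0 : 0 ≤ C := le_max_left _ _
  obtain ⟨q₀, hq₀⟩ := exists_threshold δ C hδ
  refine ⟨max q₀ 8, fun F _ _ hF p hp _ hpq => ?_⟩
  have hbig := hq₀ _ ((le_max_left _ _).trans hF)
  have hq8 : (8 : ℝ) ≤ Fintype.card F := by exact_mod_cast (le_max_right _ _).trans hF
  apply one_sub_le_randomMeasure p hp hpq.le _ _ (by positivity)
  set q : ℝ := (Fintype.card F : ℝ) with hq
  have hq0 : 0 < q := by linarith
  set x : ℝ := q ^ ((1 : ℝ) / 2 + 2 * δ) with hx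
  have hxk : x ≤ (⌊x⌋₊ + 1 : ℕ) := by
    push_cast; exact (Nat.lt_floor_add_one x).le
  have hs1 : 1 ≤ √q := Real.one_le_sqrt.2 (by linarith)
  have hss : √q * √q = q := Real.mul_self_sqrt hq0.le
  have hL1 : 1 ≤ Real.log q := by
    rw [Real.le_log_iff_exp_le hq0]; linarith [Real.exp_one_lt_three]
  have ht := (Nat.ceil_lt_add_one (Real.sqrt_nonneg q)).le
  have hj0 : 0 ≤ 16 * √q * Real.log q := by positivity
  have hj := (Nat.ceil_lt_add_one hj0).le
  have ht' := Nat.le_ceil (√q)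
  have hj' := Nat.le_ceil (16 * √q * Real.log q)
  have htq : (⌈√q⌉₊ : ℝ) ≤ 16 * q := by nlinarith
  have htk : ⌈√q⌉₊ ≤ ⌊x⌋₊ + 1 := by
    refine (Nat.ceil_le).2 (le_trans ?_ hxk)
    rw [hx, Real.sqrt_eq_rpow]
    exact Real.rpow_le_rpow_of_exponent_le (by linarith) (by linarith)
  refine (expected_arcs_le (j := ⌈16 * √q * Real.log q⌉₊) htk
    (by rw [hq] at htq; exact_mod_cast htq) ?_).trans
    ((numeric_bound hC0 hq8 hbig hxk ht hj).trans ?_)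
  · -- `(1 - β) ^ j ≤ exp (-β j) ≤ 1 / q`, since `β j ≥ log q`.
    have h1 : (1 - (⌈√q⌉₊ : ℝ) / (16 * q)) ^ ⌈16 * √q * Real.log q⌉₊ ≤ 1 / q := by
      calc (1 - (⌈√q⌉₊ : ℝ) / (16 * q)) ^ ⌈16 * √q * Real.log q⌉₊
          ≤ (Real.exp (-((⌈√q⌉₊ : ℝ) / (16 * q)))) ^ ⌈16 * √q * Real.log q⌉₊ := by
            have : (⌈√q⌉₊ : ℝ) / (16 * q) ≤ 1 := (div_le_one (by positivity)).2 htq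
            exact pow_le_pow_left₀ (by linarith) (Real.one_sub_le_exp_neg _) _
        _ ≤ Real.exp (-Real.log q) := by
            rw [← Real.exp_nat_mul]
            apply Real.exp_le_exp.2
            have h2 : Real.log q = (16 * √q * Real.log q) * (√q / (16 * q)) := by
              field_simp
              rw [Real.sq_sqrt hq0.le]
            have h3 : (16 * √q * Real.log q) * (√q / (16 * q))
                ≤ (⌈16 * √q * Real.log q⌉₊ : ℝ) * ((⌈√q⌉₊ : ℝ) / (16 * q)) := by
              gcongr
            linarith
        _ = 1 / q := by rw [Real.exp_neg, Real.exp_log hq0, one_div]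
    calc _ ≤ 1 / q * q ^ 2 := by gcongr
      _ = q := by field_simp
      _ ≤ 8 * q := by linarith
  · calc Real.exp (-C) ≤ Real.exp (Real.log ε) := by
          apply Real.exp_le_exp.2
          linarith [le_max_right 0 (-Real.log ε)]
      _ = ε := Real.exp_log hε
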